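/- arXiv:2409.13487 — 2 statements merged into one kernel-verified Lean document; each statement's English description precedes it below -/
import Mathlib

section
/- Suppose the first syzygy of R_S is S-strongly flat. Given a short exact sequence 0 → A → B → C → 0 of R-modules, S-sfd(B) ≤ max{S-sfd(A), S-sfd(C)}. -/
open CategoryTheory

universe u

variable (R : Type u) [CommRing R]

/-- `Ext^n_R(M, N) = 0`. -/
def extVanish (n : ℕ) (M N : Type u) [AddCommGroup M] [Module R M]
    [AddCommGroup N] [Module R N] : Prop :=
  Subsingleton (((Ext R (ModuleCat.{u} R) n).obj
    (Opposite.op (ModuleCat.of R M))).obj (ModuleCat.of R N))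

/-- `C` is `S`-weakly cotorsion if `Ext^1_R(R_S, C) = 0`. -/
def IsWeaklyCotorsion (S : Submonoid R) (C : Type u) [AddCommGroup C] [Module R C] : Prop :=
  extVanish R 1 (Localization S) C

/-- `F` is `S`-strongly flat if `Ext^1_R(F, C) = 0` for all `S`-weakly cotorsion `C`. -/
def IsStronglyFlat (S : Submonoid R) (F : Type u) [AddCommGroup F] [Module R F] : Prop :=
  ∀ (C : Type u) [AddCommGroup C] [Module R C], IsWeaklyCotorsion R S C → extVanish R 1 F C

/-- The `S`-strongly flat dimension of `M`: the smallest `n` with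
`Ext^{n+1}_R(M, C) = 0` for every `S`-weakly cotorsion `C`, or `∞` otherwise. -/
noncomputable def sfdim (S : Submonoid R) (M : Type u) [AddCommGroup M] [Module R M] : ℕ∞ :=
  sInf {n : ℕ∞ | ∃ m : ℕ, n = m ∧
    ∀ (C : Type u) [AddCommGroup C] [Module R C],
      IsWeaklyCotorsion R S C → extVanish R (m + 1) M C}

/-!
If the first syzygy of `R_S` is `S`-strongly flat, then `Ext^2_R(R_S, W) = 0` for every `S`-weakly
cotorsion `W`. Embedding `W` in an injective module with cokernel `D`, this says that `D` is again
`S`-weakly cotorsion; and since `Ext^n(M, D) = 0` forces `Ext^{n+1}(M, W) = 0`, vanishing of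
`Ext^n(M, -)` on all `S`-weakly cotorsion modules propagates to every larger degree. Hence
`S-sfd(M) ≤ n` amounts to the vanishing of `Ext^{n+1}(M, -)` alone, a condition which passes from
the outer terms of a short exact sequence to the middle one.
-/

universe v w

section AbelianCategory

variable {𝒜 : Type w} [Category.{v} 𝒜] [Abelian 𝒜]

section ProjectiveResolution

variable {X : 𝒜} (Q : ProjectiveResolution X) (Y : 𝒜) (n : ℕ)

lemma subsingleton_derivedExt_succ_iff_forall_cocycle {k : Type*} [Ring k] [Linear k 𝒜]
    [EnoughProjectives 𝒜] :
    Subsingleton (((Ext k 𝒜 (n + 1)).obj (Opposite.op X)).obj Y) ↔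
      ∀ φ : Q.complex.X (n + 1) ⟶ Y, Q.complex.d (n + 2) (n + 1) ≫ φ = 0 →
        ∃ ψ : Q.complex.X n ⟶ Y, Q.complex.d (n + 1) n ≫ ψ = φ := by
  rw [← ModuleCat.isZero_iff_subsingleton, (Q.isoExt (R := k) (n + 1) Y).isZero_iff,
    ← HomologicalComplex.exactAt_iff_isZero_homology,
    HomologicalComplex.exactAt_iff' _ n (n + 1) (n + 2) (by simp) (by simp),
    ShortComplex.moduleCat_exact_iff]
  rfl

lemma subsingleton_ext_succ_iff_forall_cocycle [HasExt.{u} 𝒜] :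
    Subsingleton (Abelian.Ext.{u} X Y (n + 1)) ↔
      ∀ φ : Q.complex.X (n + 1) ⟶ Y, Q.complex.d (n + 2) (n + 1) ≫ φ = 0 →
        ∃ ψ : Q.complex.X n ⟶ Y, Q.complex.d (n + 1) n ≫ ψ = φ := by
  refine ⟨fun _ φ hφ ↦ ?_, fun h ↦ subsingleton_of_forall_eq 0 fun α ↦ ?_⟩
  · exact (Q.extMk_eq_zero_iff φ (n + 2) rfl hφ n rfl).1 (Subsingleton.elim _ _)
  · obtain ⟨φ, hφ, rfl⟩ := Q.extMk_surjective α (n + 2) rfl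
    exact (Q.extMk_eq_zero_iff φ (n + 2) rfl hφ n rfl).2 (h φ hφ)

end ProjectiveResolution

lemma subsingleton_derivedExt_succ_iff [HasExt.{u} 𝒜] (k : Type*) [Ring k] [Linear k 𝒜]
    [EnoughProjectives 𝒜] (X Y : 𝒜) (n : ℕ) :
    Subsingleton (((Ext k 𝒜 (n + 1)).obj (Opposite.op X)).obj Y) ↔
      Subsingleton (Abelian.Ext.{u} X Y (n + 1)) :=
  (subsingleton_derivedExt_succ_iff_forall_cocycle (projectiveResolution X) Y n).trans
    (subsingleton_ext_succ_iff_forall_cocycle (projectiveResolution X) Y n).symm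

section ShortExact

variable [HasExt.{u} 𝒜] {T : ShortComplex 𝒜} (hT : T.ShortExact)
include hT

lemma subsingleton_ext_X₂_left (Y : 𝒜) (n : ℕ) [Subsingleton (Abelian.Ext.{u} T.X₁ Y n)]
    [Subsingleton (Abelian.Ext.{u} T.X₃ Y n)] : Subsingleton (Abelian.Ext.{u} T.X₂ Y n) := by
  refine subsingleton_of_forall_eq 0 fun α ↦ ?_
  obtain ⟨β, rfl⟩ :=
    Abelian.Ext.contravariant_sequence_exact₂ hT Y α (Subsingleton.elim _ _)
  rw [Subsingleton.elim β 0, Abelian.Ext.comp_zero]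

lemma subsingleton_ext_X₃_left (Y : 𝒜) (n : ℕ) [Subsingleton (Abelian.Ext.{u} T.X₁ Y n)]
    [Subsingleton (Abelian.Ext.{u} T.X₂ Y (n + 1))] :
    Subsingleton (Abelian.Ext.{u} T.X₃ Y (n + 1)) := by
  refine subsingleton_of_forall_eq 0 fun α ↦ ?_
  obtain ⟨β, rfl⟩ := Abelian.Ext.contravariant_sequence_exact₃ hT Y α (Subsingleton.elim _ _)
    (add_comm 1 n)
  rw [Subsingleton.elim β 0, Abelian.Ext.comp_zero]

lemma subsingleton_ext_X₁_right (X : 𝒜) (n : ℕ) [Subsingleton (Abelian.Ext.{u} X T.X₃ n)]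
    [Subsingleton (Abelian.Ext.{u} X T.X₂ (n + 1))] :
    Subsingleton (Abelian.Ext.{u} X T.X₁ (n + 1)) := by
  refine subsingleton_of_forall_eq 0 fun α ↦ ?_
  obtain ⟨β, rfl⟩ :=
    Abelian.Ext.covariant_sequence_exact₁ X hT α (Subsingleton.elim _ _) rfl
  rw [Subsingleton.elim β 0, Abelian.Ext.zero_comp]

lemma subsingleton_ext_X₃_right (X : 𝒜) (n : ℕ) [Subsingleton (Abelian.Ext.{u} X T.X₂ n)]
    [Subsingleton (Abelian.Ext.{u} X T.X₁ (n + 1))] :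
    Subsingleton (Abelian.Ext.{u} X T.X₃ n) := by
  refine subsingleton_of_forall_eq 0 fun α ↦ ?_
  obtain ⟨β, rfl⟩ :=
    Abelian.Ext.covariant_sequence_exact₃ X hT α rfl (Subsingleton.elim _ _)
  rw [Subsingleton.elim β 0, Abelian.Ext.zero_comp]

end ShortExact

/-- An object property is closed under cosyzygies if, for every short exact sequence
`0 → W → I → D → 0` with `I` injective, it passes from `W` to `D`. All choices of `I` are allowed,
so no injective embedding needs to be fixed. -/
def IsClosedUnderCosyzygies (P : ObjectProperty 𝒜) : Prop :=
  ∀ ⦃T : ShortComplex 𝒜⦄, T.ShortExact → Injective T.X₂ → P T.X₁ → P T.X₃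

variable [HasExt.{u} 𝒜]

lemma isClosedUnderCosyzygies_of_subsingleton_ext_two {X : 𝒜}
    (hX : ∀ W : 𝒜, Subsingleton (Abelian.Ext.{u} X W 1) → Subsingleton (Abelian.Ext.{u} X W 2)) :
    IsClosedUnderCosyzygies fun W : 𝒜 ↦ Subsingleton (Abelian.Ext.{u} X W 1) := by
  intro T hT _ hW
  have := hX T.X₁ hW
  have := Abelian.Ext.subsingleton_of_injective X T.X₂ 0
  exact subsingleton_ext_X₃_right hT X 1

lemma IsClosedUnderCosyzygies.subsingleton_ext_of_le [EnoughInjectives 𝒜] {P : ObjectProperty 𝒜}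
    (hP : IsClosedUnderCosyzygies P) {M : 𝒜} {m n : ℕ} (hmn : m ≤ n)
    (hM : ∀ W, P W → Subsingleton (Abelian.Ext.{u} M W m)) (W : 𝒜) (hW : P W) :
    Subsingleton (Abelian.Ext.{u} M W n) := by
  induction n, hmn using Nat.le_induction generalizing W with
  | base => exact hM W hW
  | succ n _ ih =>
    obtain ⟨I⟩ := EnoughInjectives.presentation W
    have hI := I.shortExact_shortComplex
    have := ih I.shortComplex.X₃ (hP hI I.injective hW)
    have := Abelian.Ext.subsingleton_of_injective M I.J n
    exact subsingleton_ext_X₁_right hI M n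

end AbelianCategory

lemma extVanish_succ_iff (n : ℕ) (M N : Type u) [AddCommGroup M] [Module R M]
    [AddCommGroup N] [Module R N] :
    extVanish R (n + 1) M N ↔
      Subsingleton (Abelian.Ext.{u} (ModuleCat.of R M) (ModuleCat.of R N) (n + 1)) :=
  subsingleton_derivedExt_succ_iff R (ModuleCat.of R M) (ModuleCat.of R N) n

section ShortExact

variable {R} {A B C : Type u} [AddCommGroup A] [Module R A] [AddCommGroup B] [Module R B]
  [AddCommGroup C] [Module R C] {f : A →ₗ[R] B} {g : B →ₗ[R] C}
  (hf : Function.Injective f) (hg : Function.Surjective g) (hfg : Function.Exact f g)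
  (W : Type u) [AddCommGroup W] [Module R W] (n : ℕ)
include hf hg hfg

lemma extVanish_succ_middle (hA : extVanish R (n + 1) A W) (hC : extVanish R (n + 1) C W) :
    extVanish R (n + 1) B W := by
  rw [extVanish_succ_iff] at hA hC ⊢
  have hT := ModuleCat.shortComplex_shortExact
    (ModuleCat.shortComplexOfCompEqZero f g hfg.linearMap_comp_eq_zero) hfg hf hg
  exact subsingleton_ext_X₂_left hT _ _

lemma extVanish_succ_succ_of_syzygy [Module.Projective R B] (hA : extVanish R (n + 1) A W) :
    extVanish R (n + 2) C W := by
  rw [extVanish_succ_iff] at hA ⊢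
  have : Projective (ModuleCat.of R B) := (IsProjective.iff_projective B).1 inferInstance
  have := Abelian.Ext.subsingleton_of_projective (ModuleCat.of R B) (ModuleCat.of R W) (n + 1)
  have hT := ModuleCat.shortComplex_shortExact
    (ModuleCat.shortComplexOfCompEqZero f g hfg.linearMap_comp_eq_zero) hfg hf hg
  exact subsingleton_ext_X₃_left hT _ _

end ShortExact

section Sfdim

variable {R} {S : Submonoid R}
  (hS : ∀ (W : Type u) [AddCommGroup W] [Module R W],
    IsWeaklyCotorsion R S W → extVanish R 2 (Localization S) W)
  {M : Type u} [AddCommGroup M] [Module R M]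
include hS

lemma extVanish_succ_of_le {m n : ℕ} (hmn : m ≤ n)
    (hM : ∀ (W : Type u) [AddCommGroup W] [Module R W],
      IsWeaklyCotorsion R S W → extVanish R (m + 1) M W)
    (W : Type u) [AddCommGroup W] [Module R W] (hW : IsWeaklyCotorsion R S W) :
    extVanish R (n + 1) M W := by
  simp only [IsWeaklyCotorsion, extVanish_succ_iff] at hS hM hW ⊢
  have hP := isClosedUnderCosyzygies_of_subsingleton_ext_two fun W : ModuleCat.{u} R ↦ hS W
  exact hP.subsingleton_ext_of_le (Nat.succ_le_succ hmn) (fun W ↦ hM W) (ModuleCat.of R W) hW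

lemma sfdim_le_natCast_iff {n : ℕ} :
    sfdim R S M ≤ n ↔ ∀ (W : Type u) [AddCommGroup W] [Module R W],
      IsWeaklyCotorsion R S W → extVanish R (n + 1) M W := by
  refine ⟨fun h ↦ ?_, fun h ↦ sInf_le ⟨n, rfl, h⟩⟩
  obtain ⟨_, ⟨m, rfl, hm⟩, hmn⟩ :=
    sInf_lt_iff.1 (h.trans_lt (Nat.cast_lt.2 n.lt_succ_self))
  exact extVanish_succ_of_le hS (Nat.lt_succ_iff.1 (Nat.cast_lt.1 hmn)) hm

end Sfdim

/-- If the first syzygy of `R_S` is `S`-strongly flat, then for a short exact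
sequence `0 → A → B → C → 0` one has `S-sfd(B) ≤ max{S-sfd(A), S-sfd(C)}`. -/
theorem sfdim_middle_le_max (S : Submonoid R) (H P : Type u)
    [AddCommGroup H] [Module R H] [AddCommGroup P] [Module R P]
    (i : H →ₗ[R] P) (p : P →ₗ[R] Localization S)
    (hi : Function.Injective i) (hp : Function.Surjective p) (hip : Function.Exact i p)
    (hP : Module.Projective R P) (hH : IsStronglyFlat R S H)
    (A B C : Type u) [AddCommGroup A] [Module R A] [AddCommGroup B] [Module R B]
    [AddCommGroup C] [Module R C] (f : A →ₗ[R] B) (g : B →ₗ[R] C)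
    (hf : Function.Injective f) (hg : Function.Surjective g) (hfg : Function.Exact f g) :
    sfdim R S B ≤ max (sfdim R S A) (sfdim R S C) := by
  have hS (W : Type u) [AddCommGroup W] [Module R W] (hW : IsWeaklyCotorsion R S W) :
      extVanish R 2 (Localization S) W :=
    extVanish_succ_succ_of_syzygy hi hp hip W 0 (hH W hW)
  induction hn : max (sfdim R S A) (sfdim R S C) using ENat.recTopCoe with
  | top => exact le_top
  | coe n =>
    obtain ⟨hA, hC⟩ := max_le_iff.1 hn.le
    rw [sfdim_le_natCast_iff hS] at hA hC ⊢
    exact fun W _ _ hW ↦ extVanish_succ_middle hf hg hfg W n (hA W hW) (hC W hW)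
end

section
/- Suppose the first syzygy of R_S is S-strongly flat. If 0 → A → B → C → 0 is exact, B is S-strongly flat, and C is not S-strongly flat, then S-sfd(C) = S-sfd(A) + 1. -/
/-!
Write `𝒴` for the class of `S`-weakly cotorsion modules. The syzygy hypothesis says that
`Ext²(R_S, Y) = 0` for `Y ∈ 𝒴`; shifting along `0 → Y → I → Y' → 0` with `I` injective turns this
into `Y' ∈ 𝒴`, so `𝒴` is closed under cosyzygies. Shifting again, `Ext¹(B, 𝒴) = 0` then forces
`Extⁿ⁺¹(B, 𝒴) = 0` for all `n`, and the long exact sequence of `0 → A → B → C → 0` identifies the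
vanishing of `Extⁿ⁺²(C, 𝒴)` with that of `Extⁿ⁺¹(A, 𝒴)`. Nothing here is special to `R_S`, nor to
modules.
-/

open CategoryTheory

universe u

variable (R : Type u) [CommRing R]

lemma iInf_natCast_eq_iInf_succ_add_one {p : ℕ → Prop} (hp : ¬ p 0) :
    ⨅ (n : ℕ) (_ : p n), (n : ℕ∞) = (⨅ (n : ℕ) (_ : p (n + 1)), (n : ℕ∞)) + 1 := by
  rw [← inf_iInf_nat_succ]
  simp [hp, ENat.iInf_add]

universe w

section ExtVanishing

variable {D : Type*} [Category* D] [Abelian D] [HasExt.{w} D]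

lemma subsingleton_ext_X₁_of_shortExact {T : ShortComplex D} (hT : T.ShortExact) {Y : D} {n : ℕ}
    (h₂ : Subsingleton (Abelian.Ext T.X₂ Y n)) (h₃ : Subsingleton (Abelian.Ext T.X₃ Y (n + 1))) :
    Subsingleton (Abelian.Ext T.X₁ Y n) := by
  refine subsingleton_of_forall_eq 0 fun x ↦ ?_
  obtain ⟨y, rfl⟩ := Abelian.Ext.contravariant_sequence_exact₁ hT Y x (add_comm 1 n)
    (Subsingleton.elim _ _)
  rw [Subsingleton.elim y 0, Abelian.Ext.comp_zero]

lemma subsingleton_ext_X₃_of_shortExact {T : ShortComplex D} (hT : T.ShortExact) {Y : D} {n : ℕ}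
    (h₁ : Subsingleton (Abelian.Ext T.X₁ Y n)) (h₂ : Subsingleton (Abelian.Ext T.X₂ Y (n + 1))) :
    Subsingleton (Abelian.Ext T.X₃ Y (n + 1)) := by
  refine subsingleton_of_forall_eq 0 fun x ↦ ?_
  obtain ⟨y, rfl⟩ := Abelian.Ext.contravariant_sequence_exact₃ hT Y x
    (Subsingleton.elim _ _) (add_comm 1 n)
  rw [Subsingleton.elim y 0, Abelian.Ext.comp_zero]

lemma subsingleton_ext_X₁_iff_X₃_of_injective {T : ShortComplex D} (hT : T.ShortExact)
    [Injective T.X₂] (X : D) (n : ℕ) :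
    Subsingleton (Abelian.Ext X T.X₁ (n + 2)) ↔ Subsingleton (Abelian.Ext X T.X₃ (n + 1)) := by
  constructor <;> refine fun h ↦ subsingleton_of_forall_eq 0 fun x ↦ ?_
  · obtain ⟨y, rfl⟩ := Abelian.Ext.covariant_sequence_exact₃ X hT x rfl (Subsingleton.elim _ _)
    rw [Abelian.Ext.eq_zero_of_injective y, Abelian.Ext.zero_comp]
  · obtain ⟨y, rfl⟩ := Abelian.Ext.covariant_sequence_exact₁ X hT x
      (Abelian.Ext.eq_zero_of_injective _) rfl
    rw [Subsingleton.elim y 0, Abelian.Ext.zero_comp]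

end ExtVanishing

section DerivedFunctorExt

variable {D : Type*} [Category* D] [Abelian D] {X : D}

lemma subsingleton_ext_succ_iff_of_projectiveResolution [HasExt.{w} D]
    (Q : ProjectiveResolution X) (Y : D) (n : ℕ) :
    Subsingleton (Abelian.Ext X Y (n + 1)) ↔
      ∀ φ : Q.complex.X (n + 1) ⟶ Y, Q.complex.d (n + 2) (n + 1) ≫ φ = 0 →
        ∃ ψ : Q.complex.X n ⟶ Y, Q.complex.d (n + 1) n ≫ ψ = φ := by
  refine ⟨fun _ φ hφ ↦ ?_, fun h ↦ subsingleton_of_forall_eq 0 fun α ↦ ?_⟩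
  · exact (Q.extMk_eq_zero_iff φ (n + 2) rfl hφ n rfl).1 (Subsingleton.elim _ _)
  · obtain ⟨φ, hφ, rfl⟩ := Q.extMk_surjective α (n + 2) rfl
    exact (Q.extMk_eq_zero_iff φ (n + 2) rfl hφ n rfl).2 (h φ hφ)

variable {k : Type*} [Ring k] [Linear k D] [EnoughProjectives D]

lemma isZero_derivedExt_succ_iff_of_projectiveResolution (Q : ProjectiveResolution X) (Y : D)
    (n : ℕ) :
    Limits.IsZero (((Ext k D (n + 1)).obj (Opposite.op X)).obj Y) ↔
      ∀ φ : Q.complex.X (n + 1) ⟶ Y, Q.complex.d (n + 2) (n + 1) ≫ φ = 0 →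
        ∃ ψ : Q.complex.X n ⟶ Y, Q.complex.d (n + 1) n ≫ ψ = φ := by
  rw [(Q.isoExt (n + 1) Y).isZero_iff, ← HomologicalComplex.exactAt_iff_isZero_homology,
    HomologicalComplex.exactAt_iff' _ n (n + 1) (n + 2) (by simp) (by simp),
    ShortComplex.moduleCat_exact_iff]
  exact Iff.rfl

lemma isZero_derivedExt_succ_iff_subsingleton_ext [HasExt.{w} D] (X Y : D) (n : ℕ) :
    Limits.IsZero (((Ext k D (n + 1)).obj (Opposite.op X)).obj Y) ↔
      Subsingleton (Abelian.Ext X Y (n + 1)) := by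
  let Q := ProjectiveResolution.of X
  rw [isZero_derivedExt_succ_iff_of_projectiveResolution Q,
    subsingleton_ext_succ_iff_of_projectiveResolution Q]

end DerivedFunctorExt

section RelativeProjectiveDimension

variable {D : Type*} [Category* D] [Abelian D] [HasExt.{w} D] {𝒴 : ObjectProperty D}

/-- The right `Ext¹`-orthogonal class of the object `X`. For `X = R_S` these are the `S`-weakly
cotorsion modules. -/
def extOrthogonal (X : D) : ObjectProperty D :=
  fun Y ↦ Subsingleton (Abelian.Ext X Y 1)

/-- A class of objects is closed under cosyzygies if it contains the cokernel of every
monomorphism from one of its members to an injective object. -/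
def ClosedUnderCosyzygies (𝒴 : ObjectProperty D) : Prop :=
  ∀ ⦃T : ShortComplex D⦄, T.ShortExact → Injective T.X₂ → 𝒴 T.X₁ → 𝒴 T.X₃

/-- `X` has projective dimension at most `n` relative to the class `𝒴`. Only the vanishing of
`Extⁿ⁺¹(X, 𝒴)` is required; if `𝒴` is closed under cosyzygies this implies the vanishing of all
higher `Ext` groups. -/
def HasRelProjDimLE (𝒴 : ObjectProperty D) (X : D) (n : ℕ) : Prop :=
  ∀ ⦃Y : D⦄, 𝒴 Y → Subsingleton (Abelian.Ext X Y (n + 1))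

/-- The projective dimension of `X` relative to the class `𝒴`, with value `⊤` if no bound exists.
For the class of `S`-weakly cotorsion modules it is the `S`-strongly flat dimension. -/
noncomputable def relProjDim (𝒴 : ObjectProperty D) (X : D) : ℕ∞ :=
  ⨅ (n : ℕ) (_ : HasRelProjDimLE 𝒴 X n), (n : ℕ∞)

lemma hasRelProjDimLE_of_projective (X : D) [Projective X] (n : ℕ) :
    HasRelProjDimLE 𝒴 X n :=
  fun Y _ ↦ Abelian.Ext.subsingleton_of_projective X Y n

lemma hasRelProjDimLE_X₁ {T : ShortComplex D} (hT : T.ShortExact) {n : ℕ}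
    (h₂ : HasRelProjDimLE 𝒴 T.X₂ n) (h₃ : HasRelProjDimLE 𝒴 T.X₃ (n + 1)) :
    HasRelProjDimLE 𝒴 T.X₁ n :=
  fun _ hY ↦ subsingleton_ext_X₁_of_shortExact hT (h₂ hY) (h₃ hY)

lemma hasRelProjDimLE_X₃ {T : ShortComplex D} (hT : T.ShortExact) {n : ℕ}
    (h₁ : HasRelProjDimLE 𝒴 T.X₁ n) (h₂ : HasRelProjDimLE 𝒴 T.X₂ (n + 1)) :
    HasRelProjDimLE 𝒴 T.X₃ (n + 1) :=
  fun _ hY ↦ subsingleton_ext_X₃_of_shortExact hT (h₁ hY) (h₂ hY)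

namespace HasRelProjDimLE

lemma succ [EnoughInjectives D] (h𝒴 : ClosedUnderCosyzygies 𝒴) {X : D} {n : ℕ}
    (hX : HasRelProjDimLE 𝒴 X n) : HasRelProjDimLE 𝒴 X (n + 1) := by
  intro Y hY
  obtain ⟨I⟩ := EnoughInjectives.presentation Y
  have hI := I.shortExact_shortComplex
  exact (subsingleton_ext_X₁_iff_X₃_of_injective hI X n).2 (hX (h𝒴 hI I.injective hY))

lemma mono [EnoughInjectives D] (h𝒴 : ClosedUnderCosyzygies 𝒴) {X : D} {m n : ℕ} (hmn : m ≤ n)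
    (hX : HasRelProjDimLE 𝒴 X m) : HasRelProjDimLE 𝒴 X n :=
  Nat.le_induction hX (fun _ _ ↦ succ h𝒴) n hmn

end HasRelProjDimLE

lemma closedUnderCosyzygies_extOrthogonal {X : D} (hX : HasRelProjDimLE (extOrthogonal X) X 1) :
    ClosedUnderCosyzygies (extOrthogonal X) :=
  fun _ hT _ hY ↦ (subsingleton_ext_X₁_iff_X₃_of_injective hT X 0).1 (hX hY)

lemma hasRelProjDimLE_X₃_succ_iff [EnoughInjectives D] (h𝒴 : ClosedUnderCosyzygies 𝒴)
    {T : ShortComplex D} (hT : T.ShortExact) (h₂ : HasRelProjDimLE 𝒴 T.X₂ 0) (n : ℕ) :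
    HasRelProjDimLE 𝒴 T.X₃ (n + 1) ↔ HasRelProjDimLE 𝒴 T.X₁ n :=
  ⟨hasRelProjDimLE_X₁ hT (h₂.mono h𝒴 n.zero_le),
    fun h₁ ↦ hasRelProjDimLE_X₃ hT h₁ (h₂.mono h𝒴 (n + 1).zero_le)⟩

lemma relProjDim_X₃_eq_add_one [EnoughInjectives D] (h𝒴 : ClosedUnderCosyzygies 𝒴)
    {T : ShortComplex D} (hT : T.ShortExact) (h₂ : HasRelProjDimLE 𝒴 T.X₂ 0)
    (h₃ : ¬ HasRelProjDimLE 𝒴 T.X₃ 0) : relProjDim 𝒴 T.X₃ = relProjDim 𝒴 T.X₁ + 1 := by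
  simp only [relProjDim, iInf_natCast_eq_iInf_succ_add_one h₃,
    hasRelProjDimLE_X₃_succ_iff h𝒴 hT h₂]

theorem sfdim_right_eq_add_one_general [EnoughInjectives D] {U T : ShortComplex D}
    (hU : U.ShortExact) [Projective U.X₂]
    (hU₁ : HasRelProjDimLE (extOrthogonal U.X₃) U.X₁ 0) (hT : T.ShortExact)
    (h₂ : HasRelProjDimLE (extOrthogonal U.X₃) T.X₂ 0)
    (h₃ : ¬ HasRelProjDimLE (extOrthogonal U.X₃) T.X₃ 0) :
    relProjDim (extOrthogonal U.X₃) T.X₃ = relProjDim (extOrthogonal U.X₃) T.X₁ + 1 :=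
  have hU₃ : HasRelProjDimLE (extOrthogonal U.X₃) U.X₃ 1 :=
    hasRelProjDimLE_X₃ hU hU₁ (hasRelProjDimLE_of_projective U.X₂ 1)
  relProjDim_X₃_eq_add_one (closedUnderCosyzygies_extOrthogonal hU₃) hT h₂ h₃

end RelativeProjectiveDimension

section StronglyFlatDimension

lemma extVanish_succ_iff_subsingleton_ext (n : ℕ) (M N : Type u) [AddCommGroup M] [Module R M]
    [AddCommGroup N] [Module R N] :
    extVanish R (n + 1) M N ↔
      Subsingleton (Abelian.Ext (ModuleCat.of R M) (ModuleCat.of R N) (n + 1)) := by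
  rw [extVanish, ← ModuleCat.isZero_iff_subsingleton, isZero_derivedExt_succ_iff_subsingleton_ext]

variable (S : Submonoid R) (M : Type u) [AddCommGroup M] [Module R M]

lemma isWeaklyCotorsion_iff_extOrthogonal :
    IsWeaklyCotorsion R S M ↔
      extOrthogonal (ModuleCat.of R (Localization S)) (ModuleCat.of R M) :=
  extVanish_succ_iff_subsingleton_ext R 0 (Localization S) M

lemma forall_isWeaklyCotorsion_extVanish_iff_hasRelProjDimLE (n : ℕ) :
    (∀ (C : Type u) [AddCommGroup C] [Module R C], IsWeaklyCotorsion R S C →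
      extVanish R (n + 1) M C) ↔
      HasRelProjDimLE (extOrthogonal (ModuleCat.of R (Localization S))) (ModuleCat.of R M) n := by
  simp only [isWeaklyCotorsion_iff_extOrthogonal, extVanish_succ_iff_subsingleton_ext]
  exact ⟨fun h Y hY ↦ h Y hY, fun h C _ _ hC ↦ h hC⟩

lemma isStronglyFlat_iff_hasRelProjDimLE_zero :
    IsStronglyFlat R S M ↔
      HasRelProjDimLE (extOrthogonal (ModuleCat.of R (Localization S))) (ModuleCat.of R M) 0 :=
  forall_isWeaklyCotorsion_extVanish_iff_hasRelProjDimLE R S M 0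

lemma sfdim_eq_relProjDim :
    sfdim R S M =
      relProjDim (extOrthogonal (ModuleCat.of R (Localization S))) (ModuleCat.of R M) := by
  simp only [sfdim, forall_isWeaklyCotorsion_extVanish_iff_hasRelProjDimLE, relProjDim,
    sInf_eq_iInf, Set.mem_ofPred_eq, iInf_exists, iInf_and]
  rw [iInf_comm]
  simp only [iInf_iInf_eq_left]

end StronglyFlatDimension

/-- If the first syzygy of `R_S` is `S`-strongly flat, `0 → A → B → C → 0` is exact,
`B` is `S`-strongly flat and `C` is not, then `S-sfd(C) = S-sfd(A) + 1`. -/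
theorem sfdim_right_eq_add_one (S : Submonoid R) (H P : Type u)
    [AddCommGroup H] [Module R H] [AddCommGroup P] [Module R P]
    (i : H →ₗ[R] P) (p : P →ₗ[R] Localization S)
    (hi : Function.Injective i) (hp : Function.Surjective p) (hip : Function.Exact i p)
    (hP : Module.Projective R P) (hH : IsStronglyFlat R S H)
    (A B C : Type u) [AddCommGroup A] [Module R A] [AddCommGroup B] [Module R B]
    [AddCommGroup C] [Module R C] (f : A →ₗ[R] B) (g : B →ₗ[R] C)
    (hf : Function.Injective f) (hg : Function.Surjective g) (hfg : Function.Exact f g)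
    (hB : IsStronglyFlat R S B) (hC : ¬ IsStronglyFlat R S C) :
    sfdim R S C = sfdim R S A + 1 := by
  have hPproj : Projective (ModuleCat.of R P) := (IsProjective.iff_projective P).1 hP
  rw [isStronglyFlat_iff_hasRelProjDimLE_zero] at hH hB hC
  rw [sfdim_eq_relProjDim, sfdim_eq_relProjDim]
  let U := ModuleCat.shortComplexOfCompEqZero i p hip.linearMap_comp_eq_zero
  let T := ModuleCat.shortComplexOfCompEqZero f g hfg.linearMap_comp_eq_zero
  exact sfdim_right_eq_add_one_general (U := U) (T := T)
    (ModuleCat.shortComplex_shortExact U hip hi hp) hH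
    (ModuleCat.shortComplex_shortExact T hfg hf hg) hB hC
end
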